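/- The test function f is integrable on ℝ and ∫_ℝ f(x) dx = 1. -/

import Mathlib

open MeasureTheory

/-- The test function `f(x) = (1/(2π))·sin²(x/2)/(x/2)²` for `x ≠ 0`, with `f(0) = 1/(2π)`. -/
noncomputable def f (x : ℝ) : ℝ :=
  if x = 0 then 1 / (2 * Real.pi)
  else (1 / (2 * Real.pi)) * Real.sin (x / 2) ^ 2 / (x / 2) ^ 2

/-!
Up to normalization `f` is the squared modulus of the Fourier transform of an interval indicator,
which is a `sinc`; Plancherel's theorem then evaluates `∫ sinc²` as the squared `L²` norm of the
indicator, that is, the length of the interval. Plancherel's theorem in Mathlib concerns the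
abstract Fourier transform on `Lp F 2`; it agrees almost everywhere with the Fourier integral of an
integrable function, because both have the same pairing with every Schwartz function.
-/

open Real Set
open scoped ContDiff FourierTransform SchwartzMap

theorem lpNorm_two_sq {α F : Type*} {_ : MeasurableSpace α} {μ : Measure α}
    [NormedAddCommGroup F] {u : α → F} (hu : AEStronglyMeasurable u μ) :
    lpNorm u 2 μ ^ 2 = ∫ x, ‖u x‖ ^ 2 ∂μ := by
  have h_nonneg : 0 ≤ ∫ x, ‖u x‖ ^ 2 ∂μ := by positivity
  simpa [lpNorm_eq_integral_norm_rpow_toReal two_ne_zero ENNReal.ofNat_ne_top hu] using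
    rpow_inv_natCast_pow h_nonneg two_ne_zero

section Plancherel

variable {E F : Type*} [NormedAddCommGroup E] [InnerProductSpace ℝ E] [FiniteDimensional ℝ E]
  [MeasurableSpace E] [BorelSpace E] [NormedAddCommGroup F]

theorem integral_fourier_smul_eq_of_integrable [NormedSpace ℂ F] [CompleteSpace F]
    {g : E → ℂ} {u : E → F} (hg : Integrable g) (hu : Integrable u) :
    ∫ ξ, 𝓕 g ξ • u ξ = ∫ x, g x • 𝓕 u x := by
  simpa using! VectorFourier.integral_fourierIntegral_smul_eq_flip (L := innerₗ E)
    continuous_fourierChar continuous_inner hg hu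

variable [InnerProductSpace ℂ F] [CompleteSpace F] {u : E → F}

theorem fourier_toLp_two_ae_eq (hu : Integrable u) (hu₂ : MemLp u 2) :
    (𝓕 (hu₂.toLp u) : Lp F 2 (volume : Measure E)) =ᵐ[volume] 𝓕 u := by
  have h_cont : Continuous (𝓕 u) :=
    VectorFourier.fourierIntegral_continuous continuous_fourierChar continuous_inner hu
  have h_test (φ : 𝓢(E, ℂ)) :
      ∫ x, φ x • (𝓕 (hu₂.toLp u) : Lp F 2 (volume : Measure E)) x = ∫ x, φ x • 𝓕 u x := calc
    _ = (hu₂.toLp u : 𝓢'(E, F)) (𝓕 φ) := by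
      rw [← TemperedDistribution.fourier_apply, Lp.fourier_toTemperedDistribution_eq,
        Lp.toTemperedDistribution_apply]
    _ = ∫ ξ, 𝓕 (φ : E → ℂ) ξ • u ξ := by
      rw [Lp.toTemperedDistribution_apply, SchwartzMap.fourier_coe]
      exact integral_congr_ae (hu₂.coeFn_toLp.mono fun ξ hξ ↦ congrArg _ hξ)
    _ = ∫ x, φ x • 𝓕 u x := integral_fourier_smul_eq_of_integrable φ.integrable hu
  refine ae_eq_of_integral_contDiff_smul_eq ((Lp.memLp _).locallyIntegrable one_le_two)
    h_cont.locallyIntegrable fun φ φ_smooth φ_supp ↦ ?_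
  have φ_supp' : HasCompactSupport (Complex.ofRealCLM ∘ φ) := φ_supp.comp_left rfl
  have φ_smooth' : ContDiff ℝ ∞ (Complex.ofRealCLM ∘ φ) := by fun_prop
  simpa using h_test (φ_supp'.toSchwartzMap φ_smooth')

theorem memLp_two_fourier (hu : Integrable u) (hu₂ : MemLp u 2) : MemLp (𝓕 u) 2 :=
  (memLp_congr_ae (fourier_toLp_two_ae_eq hu hu₂)).1 (Lp.memLp _)

theorem eLpNorm_two_fourier (hu : Integrable u) (hu₂ : MemLp u 2) :
    eLpNorm (𝓕 u) 2 = eLpNorm u 2 := by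
  have h_isometry : ‖(𝓕 (hu₂.toLp u) : Lp F 2 (volume : Measure E))‖ₑ = ‖hu₂.toLp u‖ₑ :=
    enorm_eq_iff_norm_eq.2 (Lp.norm_fourier_eq _)
  rwa [Lp.enorm_def, eLpNorm_congr_ae (fourier_toLp_two_ae_eq hu hu₂), Lp.enorm_toLp] at h_isometry

theorem integral_norm_sq_fourier (hu : Integrable u) (hu₂ : MemLp u 2) :
    ∫ ξ, ‖𝓕 u ξ‖ ^ 2 = ∫ x, ‖u x‖ ^ 2 := by
  have h_meas := (memLp_two_fourier hu hu₂).aestronglyMeasurable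
  rw [← lpNorm_two_sq h_meas, ← lpNorm_two_sq hu₂.aestronglyMeasurable, ← toReal_eLpNorm h_meas,
    ← toReal_eLpNorm hu₂.aestronglyMeasurable, eLpNorm_two_fourier hu hu₂]

theorem memLp_two_fourier_indicator_one {s : Set E} (hs : MeasurableSet s) (hs' : volume s ≠ ⊤) :
    MemLp (𝓕 (s.indicator (1 : E → ℂ))) 2 :=
  memLp_two_fourier ((integrable_indicator_iff hs).2 (integrableOn_const hs'))
    (memLp_indicator_const 2 hs 1 (.inr hs'))

theorem integral_norm_sq_fourier_indicator_one {s : Set E} (hs : MeasurableSet s)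
    (hs' : volume s ≠ ⊤) :
    ∫ ξ, ‖𝓕 (s.indicator (1 : E → ℂ)) ξ‖ ^ 2 = volume.real s := calc
  _ = ∫ x, ‖s.indicator (1 : E → ℂ) x‖ ^ 2 :=
    integral_norm_sq_fourier ((integrable_indicator_iff hs).2 (integrableOn_const hs'))
      (memLp_indicator_const 2 hs 1 (.inr hs'))
  _ = ∫ x, s.indicator (1 : E → ℝ) x := by
    congr 1 with x
    by_cases hx : x ∈ s <;> simp [hx]
  _ = volume.real s := integral_indicator_one hs

end Plancherel

theorem integral_exp_mul_mul_I_eq_sinc (a r : ℝ) :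
    ∫ t in -r..r, Complex.exp (↑(a * t) * Complex.I) = 2 * r * sinc (a * r) := by
  rcases eq_or_ne a 0 with rfl | ha
  · simp [two_mul]
  · have ha' : (a : ℂ) ≠ 0 := mod_cast ha
    rw [intervalIntegral.integral_comp_mul_left (fun t : ℝ ↦ Complex.exp (t * Complex.I)) ha,
      mul_neg, integral_exp_mul_I_eq_sinc, Complex.real_smul]
    push_cast
    field_simp

theorem fourier_indicator_Ioc_neg {r : ℝ} (hr : 0 ≤ r) (ξ : ℝ) :
    𝓕 ((Ioc (-r) r).indicator (1 : ℝ → ℂ)) ξ = 2 * r * sinc (2 * π * ξ * r) := calc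
  _ = ∫ t in Ioc (-r) r, Complex.exp (↑(-(2 * π * ξ) * t) * Complex.I) := by
    rw [fourier_real_eq_integral_exp_smul, ← integral_indicator measurableSet_Ioc]
    refine integral_congr_ae (.of_forall fun t ↦ ?_)
    by_cases ht : t ∈ Ioc (-r) r
    · simp only [indicator_of_mem ht, Pi.one_apply, smul_eq_mul, mul_one]
      ring_nf
    · simp only [indicator_of_notMem ht, smul_zero]
  _ = 2 * r * sinc (2 * π * ξ * r) := by
    rw [← intervalIntegral.integral_of_le (neg_le_self hr), integral_exp_mul_mul_I_eq_sinc,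
      neg_mul, sinc_neg]

theorem fourier_indicator_Ioc_inv_two_pi (ξ : ℝ) :
    𝓕 ((Ioc (-(2 * π)⁻¹) (2 * π)⁻¹).indicator (1 : ℝ → ℂ)) ξ =
      (π⁻¹ * sinc ξ : ℝ) := by
  have h_freq : 2 * π * ξ * (2 * π)⁻¹ = ξ := by field
  rw [fourier_indicator_Ioc_neg (by positivity), h_freq]
  push_cast
  ring

theorem memLp_two_sinc : MemLp sinc 2 := by
  have h_fourier := memLp_two_fourier_indicator_one
    (measurableSet_Ioc (a := -(2 * π)⁻¹) (b := (2 * π)⁻¹)) measure_Ioc_lt_top.ne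
  simp_rw [funext fourier_indicator_Ioc_inv_two_pi] at h_fourier
  simpa [pi_ne_zero] using h_fourier.re.const_mul π

theorem integral_sinc_sq : ∫ x, sinc x ^ 2 = π := by
  have h_plancherel := integral_norm_sq_fourier_indicator_one
    (measurableSet_Ioc (a := -(2 * π)⁻¹) (b := (2 * π)⁻¹)) measure_Ioc_lt_top.ne
  simp_rw [fourier_indicator_Ioc_inv_two_pi, Complex.norm_real, Real.norm_eq_abs, sq_abs, mul_pow,
    integral_const_mul] at h_plancherel
  calc ∫ x, sinc x ^ 2
    _ = π ^ 2 * (π⁻¹ ^ 2 * ∫ x, sinc x ^ 2) := by field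
    _ = π ^ 2 * ((2 * π)⁻¹ - -(2 * π)⁻¹) := by
      rw [h_plancherel, Real.volume_real_Ioc_of_le (neg_le_self (by positivity))]
    _ = π := by field

theorem f_eq_sinc_sq (x : ℝ) : f x = (2 * π)⁻¹ * sinc (x / 2) ^ 2 := by
  rcases eq_or_ne x 0 with rfl | hx
  · simp [f]
  · rw [f, if_neg hx, sinc_of_ne_zero (by simpa using hx), div_pow (sin _), one_div,
      mul_div_assoc]

theorem f_integrable_integral_one :
    Integrable f ∧ ∫ x : ℝ, f x = 1 := by
  have hf : f = fun x ↦ (2 * π)⁻¹ * sinc (x / 2) ^ 2 := funext f_eq_sinc_sq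
  constructor
  · rw [hf]
    exact (memLp_two_sinc.integrable_sq.comp_div two_ne_zero).const_mul _
  · calc ∫ x, f x
      _ = (2 * π)⁻¹ * ∫ x, sinc (x / 2) ^ 2 := by rw [hf, integral_const_mul]
      _ = (2 * π)⁻¹ * (2 * π) := by
        rw [Measure.integral_comp_div (fun x ↦ sinc x ^ 2), integral_sinc_sq, abs_two,
          smul_eq_mul]
      _ = 1 := inv_mul_cancel₀ (by positivity)
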